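/- arXiv:2303.05932 — 2 statements merged into one kernel-verified Lean document; each statement's English description precedes it below -/
import Mathlib

section
/- Let ℓ be a prime and n a natural number. The number of finitely supported functions w which assign to each triple (a, 𝔠, j) — where a ∈ ℕ, 𝔠 ∈ 𝒞 and 1 ≤ j ≤ (ℓ−1)^{t(𝔠)} — an ℓ-core partition w(a, 𝔠, j), subject to the condition Σ_{(a,𝔠,j)} ℓ^{a+|𝔠|} · |w(a,𝔠,j)| = n, is equal to the number of partitions of n. (This is the combinatorial content of the weight count for the fusion system of the compact Lie group U(n) at the prime ℓ: the number of weights equals |Irr(S_n)| = p(n).) -/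
/-- The sum `|𝔠| = c₁ + ⋯ + c_t` of a finite sequence `𝔠` of strictly positive integers. -/
def csum (c : List ℕ+) : ℕ := (c.map fun x => (x : ℕ)).sum

/-- The beta-set (set of first-column hook lengths) of a partition `p`, computed with `N`
beads: if the parts of `p` in decreasing order (padded with zeros to length `N`) are
`λ₁ ≥ λ₂ ≥ … ≥ λ_N`, then `betaSet p N = {λ₁ + N - 1, λ₂ + N - 2, …, λ_N}`. -/
def betaSet {n : ℕ} (p : Nat.Partition n) (N : ℕ) : Finset ℕ :=
  (Finset.range N).image fun i => ((p.parts.sort (· ≥ ·)).getD i 0) + (N - 1 - i)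

/-- A partition is an `ℓ`-core if (for every `N` at least the number of parts) its beta-set
`B` on `N` beads satisfies: every `b ∈ B` with `b ≥ ℓ` has `b - ℓ ∈ B`.  This is equivalent
to the Young diagram having no hook of length `ℓ`. -/
def IsCore (ℓ : ℕ) {n : ℕ} (p : Nat.Partition n) : Prop :=
  ∀ N : ℕ, Multiset.card p.parts ≤ N →
    ∀ b ∈ betaSet p N, ℓ ≤ b → b - ℓ ∈ betaSet p N

/-!
Reading the runners of the `ℓ`-abacus of a partition gives its `ℓ`-core and `ℓ`-quotient, and this
is a bijection between partitions and pairs of an `ℓ`-core and `ℓ` arbitrary partitions with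
`|λ| = |core| + ℓ * |quotient|`. Iterating it on the components of the quotient replaces a partition
by its `ℓ`-core tower: one `ℓ`-core for each word over `ℓ` letters, those at words of length `d`
counted with weight `ℓ ^ d`. A word of length `d` consists of runs of the letter `0` separated by
nonzero letters. A leading run of length `a`, the lengths `c₁, …, c_t` of the blocks formed by a
nonzero letter and the zeros after it, and the `(ℓ - 1) ^ t` choices of nonzero letters make up
exactly one triple `(a, 𝔠, j)` with `a + |𝔠| = d`.

The numbering of the runners depends on the number of beads modulo `ℓ`; displaying `λ` on `ℓ * |λ|`
beads makes it canonical.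
-/

/-! ### Partitions and beta-sets -/

/-- A partition of an unspecified natural number, as a pair of its size and the partition. -/
abbrev SizedPartition : Type := Σ n : ℕ, n.Partition

namespace SizedPartition

/-- The `i`-th row length of a partition, counted from `0` and equal to `0` past the last row. -/
def row (p : SizedPartition) (i : ℕ) : ℕ := (p.2.parts.sort (· ≥ ·)).getD i 0

/-- The number of rows of a partition. -/
def len (p : SizedPartition) : ℕ := Multiset.card p.2.parts

/-- The beta-set of a partition on `N` beads, which is faithful once `p.len ≤ N`. -/
def beads (p : SizedPartition) (N : ℕ) : Finset ℕ := betaSet p.2 N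

variable {p q : SizedPartition} {N : ℕ}

theorem beads_eq_image (p : SizedPartition) (N : ℕ) :
    p.beads N = (Finset.range N).image fun i => p.row i + (N - 1 - i) := rfl

theorem mem_beads {x : ℕ} : x ∈ p.beads N ↔ ∃ i < N, p.row i + (N - 1 - i) = x := by
  simp only [beads_eq_image, Finset.mem_image, Finset.mem_range]

theorem parts_injective {p q : SizedPartition} (h : p.2.parts = q.2.parts) : p = q := by
  obtain ⟨m, p⟩ := p
  obtain ⟨n, q⟩ := q
  obtain rfl : m = n := p.parts_sum.symm.trans ((congrArg Multiset.sum h).trans q.parts_sum)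
  exact congrArg _ (Nat.Partition.ext h)

theorem len_le_size (p : SizedPartition) : p.len ≤ p.1 := by
  have h := Multiset.card_nsmul_le_sum (s := p.2.parts) (a := 1) fun _ hx => p.2.parts_pos hx
  rwa [p.2.parts_sum, smul_eq_mul, mul_one] at h

theorem eq_of_size_eq_zero (hp : p.1 = 0) (hq : q.1 = 0) : p = q := by
  have hparts {r : SizedPartition} (hr : r.1 = 0) : r.2.parts = 0 :=
    Multiset.card_eq_zero.1 (Nat.le_zero.1 (hr ▸ r.len_le_size))
  exact parts_injective ((hparts hp).trans (hparts hq).symm)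

theorem length_sort_parts (p : SizedPartition) : (p.2.parts.sort (· ≥ ·)).length = p.len :=
  Multiset.length_sort _

theorem row_eq_getElem {i : ℕ} (h : i < (p.2.parts.sort (· ≥ ·)).length) :
    p.row i = (p.2.parts.sort (· ≥ ·))[i] :=
  List.getD_eq_getElem _ _ h

theorem row_eq_zero_iff {i : ℕ} : p.row i = 0 ↔ p.len ≤ i := by
  rw [← length_sort_parts]
  refine ⟨fun h => ?_, List.getD_eq_default _ _⟩
  by_contra! hi
  rw [row_eq_getElem hi] at h
  exact (p.2.parts_pos ((Multiset.mem_sort _).1 (List.getElem_mem hi))).ne' h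

theorem row_antitone (p : SizedPartition) : Antitone p.row := by
  intro i j hij
  rcases lt_or_ge j p.len with hj | hj
  · have hj' : j < (p.2.parts.sort (· ≥ ·)).length := by rwa [length_sort_parts]
    rw [row_eq_getElem hj', row_eq_getElem (hij.trans_lt hj')]
    exact (Multiset.pairwise_sort _ _).sortedGE.antitone_get (a := ⟨i, _⟩) (b := ⟨j, _⟩) hij
  · exact (row_eq_zero_iff.2 hj).trans_le (Nat.zero_le _)

theorem row_injective : Function.Injective row := by
  intro p q h
  have hlen : p.len = q.len :=
    eq_of_forall_ge_iff fun i => by rw [← row_eq_zero_iff, ← row_eq_zero_iff, h]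
  apply parts_injective
  rw [← Multiset.sort_eq p.2.parts (· ≥ ·), ← Multiset.sort_eq q.2.parts (· ≥ ·)]
  refine congrArg _ (List.ext_getElem ?_ fun i hp hq => ?_)
  · rw [length_sort_parts, length_sort_parts, hlen]
  · rw [← row_eq_getElem hp, ← row_eq_getElem hq, h]

theorem sum_row (h : p.len ≤ N) : ∑ i ∈ Finset.range N, p.row i = p.1 := by
  have hrest : ∀ i ∈ Finset.range N, i ∉ Finset.range p.len → p.row i = 0 := fun i _ hi =>
    row_eq_zero_iff.2 (not_lt.1 fun h => hi (Finset.mem_range.2 h))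
  rw [← Finset.sum_subset (Finset.range_subset_range.2 h) hrest, ← length_sort_parts,
    Finset.sum_range]
  calc ∑ i : Fin (p.2.parts.sort (· ≥ ·)).length, p.row i
      = ∑ i : Fin (p.2.parts.sort (· ≥ ·)).length, (p.2.parts.sort (· ≥ ·))[i] :=
        Finset.sum_congr rfl fun i _ => row_eq_getElem i.2
    _ = (p.2.parts.sort (· ≥ ·)).sum := Fin.sum_univ_getElem _
    _ = p.1 := by rw [← Multiset.sum_coe, Multiset.sort_eq, p.2.parts_sum]

theorem bead_strictAntiOn (p : SizedPartition) (N : ℕ) :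
    StrictAntiOn (fun i => p.row i + (N - 1 - i)) (Finset.range N) := by
  intro i _ j hj hij
  have := p.row_antitone hij.le
  have := Finset.mem_range.1 hj
  dsimp only
  omega

theorem card_beads (p : SizedPartition) (N : ℕ) : (p.beads N).card = N := by
  rw [beads_eq_image, Finset.card_image_of_injOn (p.bead_strictAntiOn N).injOn, Finset.card_range]

theorem sum_beads (h : p.len ≤ N) :
    ∑ b ∈ p.beads N, b = p.1 + ∑ i ∈ Finset.range N, i := by
  rw [beads_eq_image, Finset.sum_image (p.bead_strictAntiOn N).injOn, Finset.sum_add_distrib,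
    sum_row h, Finset.sum_range_reflect (fun i => i) N]

theorem beads_injOn (N : ℕ) : Set.InjOn (fun p => beads p N) {p | p.len ≤ N} := by
  intro p hp q hq h
  have hanti (r : SizedPartition) : StrictAnti fun i : Fin N => r.row i + (N - 1 - i) :=
    fun i j hij => r.bead_strictAntiOn N (by simp) (by simp) hij
  have hrange (r : SizedPartition) :
      Set.range (fun i : Fin N => r.row i + (N - 1 - i)) = r.beads N := by
    ext x
    simp only [Set.mem_range, Finset.mem_coe, mem_beads, Fin.exists_iff, exists_prop]
  have hbead := ((hanti p).range_inj (hanti q)).1 (by rw [hrange, hrange]; exact congrArg _ h)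
  refine row_injective (funext fun i => ?_)
  rcases lt_or_ge i N with hi | hi
  · exact Nat.add_right_cancel (congrFun hbead ⟨i, hi⟩)
  · rw [row_eq_zero_iff.2 (hp.trans hi), row_eq_zero_iff.2 (hq.trans hi)]

theorem mem_beads_add (h : p.len ≤ N) {d x : ℕ} :
    x ∈ p.beads (N + d) ↔ x < d ∨ d ≤ x ∧ x - d ∈ p.beads N := by
  simp only [mem_beads]
  constructor
  · rintro ⟨i, hi, rfl⟩
    rcases lt_or_ge i N with hiN | hiN
    · exact .inr ⟨by omega, i, hiN, by omega⟩
    · rw [row_eq_zero_iff.2 (h.trans hiN)]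
      omega
  · rintro (hx | ⟨hx, i, hi, hix⟩)
    · exact ⟨N + d - 1 - x, by omega, by rw [row_eq_zero_iff.2 (by omega)]; omega⟩
    · exact ⟨i, by omega, by omega⟩

end SizedPartition

theorem getD_filter_ne_zero {L : List ℕ} (h : L.Pairwise (· ≥ ·)) (i : ℕ) :
    (L.filter (· ≠ 0)).getD i 0 = L.getD i 0 := by
  induction L generalizing i with
  | nil => rfl
  | cons a L ih =>
    rw [List.pairwise_cons] at h
    rcases Nat.eq_zero_or_pos a with rfl | ha
    · have hzero : ∀ x ∈ 0 :: L, x = 0 := by simpa using h.1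
      have hnil : (0 :: L).filter (· ≠ 0) = [] := by simpa using hzero
      rw [hnil, List.getD_nil]
      rcases lt_or_ge i (0 :: L).length with hi | hi
      · rw [List.getD_eq_getElem _ _ hi, hzero _ (List.getElem_mem hi)]
      · rw [List.getD_eq_default _ _ hi]
    · rw [List.filter_cons_of_pos (by simpa using ha.ne')]
      cases i with
      | zero => rfl
      | succ i => exact ih h.2 i

theorem add_sub_le_of_strictMono {n : ℕ} {f : Fin n → ℕ} (hf : StrictMono f) {i j : Fin n}
    (hij : i ≤ j) : f i + (j - i : ℕ) ≤ f j := by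
  have h := Finset.card_le_card_of_injOn f (s := Finset.Ico i j) (t := Finset.Ico (f i) (f j))
    (fun k hk => by
      have := Finset.mem_Ico.1 hk
      exact Finset.mem_coe.2 (Finset.mem_Ico.2 ⟨hf.monotone this.1, hf this.2⟩)) hf.injective.injOn
  rw [Fin.card_Ico, Nat.card_Ico] at h
  have := hf.monotone hij
  omega

theorem le_apply_of_strictMono {n : ℕ} {f : Fin n → ℕ} (hf : StrictMono f) (i : Fin n) :
    (i : ℕ) ≤ f i := by
  have h := add_sub_le_of_strictMono hf (i := ⟨0, i.pos⟩) (Nat.zero_le i)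
  exact (Nat.le_add_left ..).trans h

namespace SizedPartition
variable {N : ℕ}

/-- The partition with at most `B.card` rows whose beta-set on `B.card` beads is `B`: the row
attached to a bead counts the unoccupied positions below it. -/
def ofBeads (B : Finset ℕ) : SizedPartition :=
  ⟨_, .ofMultiset (List.ofFn fun i : Fin B.card => B.orderEmbOfFin rfl i.rev - i.rev)⟩

theorem row_ofMultiset {L : List ℕ} (h : L.Pairwise (· ≥ ·)) (i : ℕ) :
    row ⟨_, .ofMultiset L⟩ i = L.getD i 0 := by
  rw [← getD_filter_ne_zero h, row, Nat.Partition.ofMultiset_parts, Multiset.filter_coe,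
    Multiset.coe_sort, List.mergeSort_eq_self]
  exact (h.filter _).imp (by simp)

theorem len_ofBeads_le (B : Finset ℕ) : (ofBeads B).len ≤ B.card := by
  rw [len, ofBeads, Nat.Partition.ofMultiset_parts]
  exact (Multiset.card_le_card (Multiset.filter_le _ _)).trans (by simp)

theorem row_ofBeads (B : Finset ℕ) (i : Fin B.card) :
    (ofBeads B).row i = B.orderEmbOfFin rfl i.rev - i.rev := by
  have hB := (B.orderEmbOfFin rfl).strictMono
  rw [ofBeads, row_ofMultiset]
  · rw [List.getD_eq_getElem _ _ (by simp)]
    simp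
  · refine List.pairwise_ofFn.2 fun i j hij => ?_
    have := add_sub_le_of_strictMono hB (Fin.rev_le_rev.2 hij.le)
    have : (j.rev : ℕ) ≤ i.rev := Fin.rev_le_rev.2 hij.le
    omega

theorem beads_ofBeads {B : Finset ℕ} (h : B.card = N) : (ofBeads B).beads N = B := by
  subst h
  refine Finset.eq_of_subset_of_card_le (fun x hx => ?_) (card_beads ..).ge
  obtain ⟨i, hi, rfl⟩ := mem_beads.1 hx
  have hrow := row_ofBeads B ⟨i, hi⟩
  have := le_apply_of_strictMono (B.orderEmbOfFin rfl).strictMono (Fin.rev ⟨i, hi⟩)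
  have hbead : (ofBeads B).row i + (B.card - 1 - i) = B.orderEmbOfFin rfl (Fin.rev ⟨i, hi⟩) := by
    simp only [Fin.val_rev] at hrow this
    omega
  exact hbead ▸ Finset.orderEmbOfFin_mem ..

theorem ofBeads_beads {p : SizedPartition} (h : p.len ≤ N) : ofBeads (p.beads N) = p :=
  beads_injOn N ((len_ofBeads_le _).trans_eq (p.card_beads N)) h (beads_ofBeads (p.card_beads N))

end SizedPartition

/-! ### The abacus -/

theorem eq_range_card_of_isLowerSet {s : Finset ℕ} (h : IsLowerSet (s : Set ℕ)) :
    s = Finset.range s.card := by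
  refine Finset.eq_of_subset_of_card_le (fun q hq => ?_) (Finset.card_range _).le
  have hsub : Finset.range (q + 1) ⊆ s := fun r hr => h (Finset.mem_range_succ_iff.1 hr) hq
  exact Finset.mem_range.2 ((Finset.card_range _).symm.trans_le (Finset.card_le_card hsub))

section Abacus

variable {ℓ : ℕ} [NeZero ℓ]

/-- The position on the number line of bead `q` of runner `i` of the `ℓ`-abacus, namely
`q * ℓ + i`. -/
def abacusPosition (ℓ : ℕ) [NeZero ℓ] : (Σ _ : Fin ℓ, ℕ) ≃ ℕ :=
  ((Equiv.sigmaEquivProd _ _).trans (.prodComm _ _)).trans (Nat.divModEquiv ℓ).symm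

theorem exists_eq_mul_add (b : ℕ) : ∃ (i : Fin ℓ) (q : ℕ), q * ℓ + i = b :=
  let ⟨⟨i, q⟩, h⟩ := (abacusPosition ℓ).surjective b
  ⟨i, q, h⟩

/-- The `ℓ`-abacus: a set of beads is split into `ℓ` runners, runner `i` holding the quotients of
the beads with remainder `i` modulo `ℓ`. -/
noncomputable def abacus (ℓ : ℕ) [NeZero ℓ] : Finset ℕ ≃ (Fin ℓ → Finset ℕ) where
  toFun B i := B.preimage (fun q => abacusPosition ℓ ⟨i, q⟩)
    ((abacusPosition ℓ).injective.comp sigma_mk_injective).injOn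
  invFun C := (Finset.univ.sigma C).map (abacusPosition ℓ).toEmbedding
  left_inv B := by
    ext b
    obtain ⟨x, rfl⟩ := (abacusPosition ℓ).surjective b
    simp
  right_inv C := by
    ext i q
    simp

theorem mem_abacus {B : Finset ℕ} {i : Fin ℓ} {q : ℕ} : q ∈ abacus ℓ B i ↔ q * ℓ + i ∈ B :=
  Finset.mem_preimage (hf := ((abacusPosition ℓ).injective.comp sigma_mk_injective).injOn)

theorem sum_abacus_symm (C : Fin ℓ → Finset ℕ) (f : ℕ → ℕ) :
    ∑ b ∈ (abacus ℓ).symm C, f b = ∑ i, ∑ q ∈ C i, f (q * ℓ + i) :=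
  (Finset.sum_map ..).trans (Finset.sum_sigma ..)

theorem card_abacus_symm (C : Fin ℓ → Finset ℕ) :
    ((abacus ℓ).symm C).card = ∑ i, (C i).card := by
  simpa only [Finset.card_eq_sum_ones] using sum_abacus_symm C fun _ => 1

theorem sum_card_abacus (B : Finset ℕ) : ∑ i, (abacus ℓ B i).card = B.card := by
  rw [← card_abacus_symm, Equiv.symm_apply_apply]

theorem sum_id_abacus_symm (C : Fin ℓ → Finset ℕ) :
    ∑ b ∈ (abacus ℓ).symm C, b = ℓ * ∑ i, ∑ q ∈ C i, q + ∑ i : Fin ℓ, (C i).card * (i : ℕ) := by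
  rw [sum_abacus_symm C fun b => b, Finset.mul_sum, ← Finset.sum_add_distrib]
  refine Finset.sum_congr rfl fun i _ => ?_
  rw [Finset.sum_add_distrib, ← Finset.sum_mul, mul_comm ℓ, Finset.sum_const, smul_eq_mul]

/-- A set of beads is `ℓ`-closed if no bead can slide down its runner of the `ℓ`-abacus. -/
def IsBeadClosed (ℓ : ℕ) (B : Finset ℕ) : Prop := ∀ b ∈ B, ℓ ≤ b → b - ℓ ∈ B

theorem isBeadClosed_abacus_symm_range (k : Fin ℓ → ℕ) :
    IsBeadClosed ℓ ((abacus ℓ).symm fun i => Finset.range (k i)) := by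
  intro b hb hℓ
  obtain ⟨i, q, rfl⟩ := exists_eq_mul_add (ℓ := ℓ) b
  obtain ⟨q, rfl⟩ := Nat.exists_eq_succ_of_ne_zero (n := q) (by rintro rfl; omega)
  have hpred : (q + 1) * ℓ + i - ℓ = q * ℓ + i := by rw [add_mul]; omega
  rw [hpred]
  rw [← mem_abacus, Equiv.apply_symm_apply, Finset.mem_range] at hb ⊢
  exact (Nat.lt_succ_self q).trans hb

theorem IsBeadClosed.abacus_eq_range {B : Finset ℕ} (h : IsBeadClosed ℓ B)
    (i : Fin ℓ) : abacus ℓ B i = Finset.range (abacus ℓ B i).card := by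
  have hpred : ∀ q, q + 1 ∈ abacus ℓ B i → q ∈ abacus ℓ B i := by
    intro q hq
    have hb := h _ (mem_abacus.1 hq) (by rw [add_mul]; omega)
    rwa [show (q + 1) * ℓ + i - ℓ = q * ℓ + i by rw [add_mul]; omega, ← mem_abacus] at hb
  refine eq_range_card_of_isLowerSet fun q r hrq hq => ?_
  induction q, hrq using Nat.le_induction with
  | base => exact hq
  | succ q _ ih => exact ih (hpred q hq)

end Abacus

namespace SizedPartition
variable {p : SizedPartition} {N ℓ : ℕ}

theorem isBeadClosed_beads_add (h : p.len ≤ N) (d : ℕ) :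
    IsBeadClosed ℓ (p.beads (N + d)) ↔ IsBeadClosed ℓ (p.beads N) := by
  simp only [IsBeadClosed, mem_beads_add h]
  constructor
  · intro H b hb hℓ
    have hbd := H (b + d) (.inr ⟨by omega, by rwa [Nat.add_sub_cancel]⟩) (by omega)
    rcases hbd with _ | ⟨_, hbd⟩
    · omega
    · rwa [show b + d - ℓ - d = b - ℓ by omega] at hbd
  · rintro H b (hb | ⟨hdb, hb⟩) hℓ
    · omega
    · by_cases hbd : b - ℓ < d
      · exact .inl hbd
      · have := H _ hb (by omega)
        exact .inr ⟨by omega, by rwa [Nat.sub_right_comm]⟩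

theorem isCore_iff_isBeadClosed (h : p.len ≤ N) : IsCore ℓ p.2 ↔ IsBeadClosed ℓ (p.beads N) := by
  have hlen {M : ℕ} (hM : p.len ≤ M) :
      IsBeadClosed ℓ (p.beads M) ↔ IsBeadClosed ℓ (p.beads p.len) := by
    obtain ⟨d, rfl⟩ := Nat.exists_eq_add_of_le hM
    exact isBeadClosed_beads_add le_rfl d
  exact ⟨fun H => H N h, fun H M hM => (hlen hM).2 ((hlen h).1 H)⟩

end SizedPartition

/-! ### Cores and quotients -/

namespace SizedPartition
section CoreQuotient
variable {ℓ : ℕ} [NeZero ℓ] {p q κ : SizedPartition} {μ : Fin ℓ → SizedPartition}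
  {k : Fin ℓ → ℕ} {n : ℕ}

/-- The `ℓ`-core of a partition: slide all beads of its `ℓ`-abacus down as far as possible. The
number of beads is a multiple of `ℓ` that is at least the number of rows. -/
noncomputable def core (ℓ : ℕ) [NeZero ℓ] (p : SizedPartition) : SizedPartition :=
  ofBeads ((abacus ℓ).symm fun i => Finset.range (abacus ℓ (p.beads (ℓ * p.1)) i).card)

/-- The `ℓ`-quotient of a partition: read each runner of its `ℓ`-abacus, with the same number of
beads as for `core`, as a beta-set. -/
noncomputable def quotient (ℓ : ℕ) [NeZero ℓ] (p : SizedPartition) (i : Fin ℓ) : SizedPartition :=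
  ofBeads (abacus ℓ (p.beads (ℓ * p.1)) i)

theorem card_flush_abacus (B : Finset ℕ) :
    ((abacus ℓ).symm fun i => Finset.range (abacus ℓ B i).card).card = B.card := by
  simp only [card_abacus_symm, Finset.card_range, sum_card_abacus]

theorem len_le_mul_size (p : SizedPartition) : p.len ≤ ℓ * p.1 :=
  p.len_le_size.trans (Nat.le_mul_of_pos_left _ (NeZero.pos ℓ))

theorem len_core_le (p : SizedPartition) : (core ℓ p).len ≤ ℓ * p.1 :=
  (len_ofBeads_le _).trans_eq ((card_flush_abacus _).trans (card_beads ..))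

theorem beads_core (p : SizedPartition) : (core ℓ p).beads (ℓ * p.1) =
    (abacus ℓ).symm fun i => Finset.range (abacus ℓ (p.beads (ℓ * p.1)) i).card :=
  beads_ofBeads ((card_flush_abacus _).trans (card_beads ..))

theorem beads_quotient (p : SizedPartition) (i : Fin ℓ) :
    (quotient ℓ p i).beads (abacus ℓ (p.beads (ℓ * p.1)) i).card =
      abacus ℓ (p.beads (ℓ * p.1)) i :=
  beads_ofBeads rfl

theorem isCore_core (p : SizedPartition) : IsCore ℓ (core ℓ p).2 := by
  rw [isCore_iff_isBeadClosed (len_core_le p), beads_core]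
  exact isBeadClosed_abacus_symm_range _

theorem sum_abacus_symm_beads (h : ∀ i, (μ i).len ≤ k i) :
    ∑ b ∈ (abacus ℓ).symm (fun i => (μ i).beads (k i)), b =
      ∑ b ∈ (abacus ℓ).symm (fun i => Finset.range (k i)), b + ℓ * ∑ i, (μ i).1 := by
  simp only [sum_id_abacus_symm, card_beads, Finset.card_range, sum_beads (h _),
    Finset.sum_add_distrib]
  ring

theorem size_eq_core_add_quotient (ℓ : ℕ) [NeZero ℓ] (p : SizedPartition) :
    p.1 = (core ℓ p).1 + ℓ * ∑ i, (quotient ℓ p i).1 := by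
  have hp := sum_beads (len_le_mul_size (ℓ := ℓ) p)
  have hcore := sum_beads (len_core_le (ℓ := ℓ) p)
  have hquot := sum_abacus_symm_beads (μ := quotient ℓ p)
    (k := fun i => (abacus ℓ (p.beads (ℓ * p.1)) i).card) fun i => len_ofBeads_le _
  simp only [beads_quotient, ← beads_core, Equiv.symm_apply_apply] at hquot
  omega

theorem core_quotient_injective (hcore : core ℓ p = core ℓ q)
    (hquot : quotient ℓ p = quotient ℓ q) : p = q := by
  have hsize : p.1 = q.1 := by
    rw [size_eq_core_add_quotient ℓ p, hcore, hquot, ← size_eq_core_add_quotient]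
  have hflush : (abacus ℓ).symm (fun i => Finset.range (abacus ℓ (p.beads (ℓ * p.1)) i).card) =
      (abacus ℓ).symm fun i => Finset.range (abacus ℓ (q.beads (ℓ * q.1)) i).card := by
    rw [← beads_core, ← beads_core, hcore, hsize]
  have hcard (i : Fin ℓ) :
      (abacus ℓ (p.beads (ℓ * p.1)) i).card = (abacus ℓ (q.beads (ℓ * q.1)) i).card := by
    simpa only [Finset.card_range] using
      congrArg Finset.card (congrFun ((abacus ℓ).symm.injective hflush) i)
  have hbeads : p.beads (ℓ * p.1) = q.beads (ℓ * q.1) :=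
    (abacus ℓ).injective (funext fun i => by
      rw [← beads_quotient p, ← beads_quotient q, hquot, hcard])
  refine beads_injOn _ (len_le_mul_size (ℓ := ℓ) p) (hsize ▸ len_le_mul_size q) ?_
  exact hbeads.trans (by rw [hsize])

theorem len_le_card_abacus_beads (h : κ.1 + ℓ * q.1 ≤ n) (i : Fin ℓ) :
    q.len ≤ (abacus ℓ (κ.beads (ℓ * n)) i).card := by
  refine (Finset.card_range _).symm.trans_le (Finset.card_le_card fun x hx => ?_)
  have hx : (x + 1) * ℓ ≤ q.1 * ℓ :=
    Nat.mul_le_mul_right _ ((Finset.mem_range.1 hx).trans_le q.len_le_size)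
  have := κ.len_le_size
  have : n ≤ ℓ * n := Nat.le_mul_of_pos_left _ (NeZero.pos ℓ)
  have := i.2
  -- All positions below `ℓ * n - κ.len` are occupied.
  rw [mem_abacus, ← Nat.add_sub_cancel' (show κ.len ≤ ℓ * n by omega), mem_beads_add le_rfl]
  left
  rw [add_mul] at hx
  rw [mul_comm] at h
  omega

theorem exists_core_quotient (hκ : IsCore ℓ κ.2) (μ : Fin ℓ → SizedPartition) :
    ∃ p, core ℓ p = κ ∧ quotient ℓ p = μ := by
  set n := κ.1 + ℓ * ∑ i, (μ i).1 with hn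
  set k : Fin ℓ → ℕ := fun i => (abacus ℓ (κ.beads (ℓ * n)) i).card
  have hκn : κ.len ≤ ℓ * n :=
    (len_le_mul_size κ).trans (Nat.mul_le_mul_left _ (Nat.le_add_right ..))
  have hμ (i : Fin ℓ) : (μ i).len ≤ k i :=
    len_le_card_abacus_beads (Nat.add_le_add_left (Nat.mul_le_mul_left _
      (Finset.single_le_sum_of_canonicallyOrdered (f := fun i => (μ i).1) (Finset.mem_univ i))) _) i
  have hflush : (abacus ℓ).symm (fun i => Finset.range (k i)) = κ.beads (ℓ * n) := by
    rw [Equiv.symm_apply_eq]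
    exact funext fun i =>
      (((isCore_iff_isBeadClosed hκn).1 hκ).abacus_eq_range i).symm
  set B := (abacus ℓ).symm fun i => (μ i).beads (k i) with hB
  have hcard : B.card = ℓ * n := by
    rw [hB, card_abacus_symm]
    simp only [card_beads, k, sum_card_abacus]
  have hbeads : (ofBeads B).beads (ℓ * n) = B := beads_ofBeads hcard
  have hsize : (ofBeads B).1 = n := by
    have hsum := sum_beads ((len_ofBeads_le B).trans_eq hcard)
    have hsumB : ∑ b ∈ B, b = ∑ b ∈ κ.beads (ℓ * n), b + ℓ * ∑ i, (μ i).1 := by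
      rw [hB, sum_abacus_symm_beads hμ, hflush]
    rw [hbeads, hsumB, sum_beads hκn] at hsum
    rw [hn]
    omega
  have hrunner (i : Fin ℓ) :
      abacus ℓ ((ofBeads B).beads (ℓ * (ofBeads B).1)) i = (μ i).beads (k i) := by
    rw [hsize, hbeads, hB, Equiv.apply_symm_apply]
  refine ⟨ofBeads B, ?_, funext fun i => ?_⟩
  · simp only [core, hrunner, card_beads, hflush, ofBeads_beads hκn]
  · rw [quotient, hrunner, ofBeads_beads (hμ i)]

theorem existsUnique_core_quotient (hκ : IsCore ℓ κ.2) (μ : Fin ℓ → SizedPartition) :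
    ∃! p, core ℓ p = κ ∧ quotient ℓ p = μ := by
  obtain ⟨p, hp⟩ := exists_core_quotient hκ μ
  exact ⟨p, hp, fun q hq =>
    core_quotient_injective (hq.1.trans hp.1.symm) (hq.2.trans hp.2.symm)⟩

theorem size_core_le (ℓ : ℕ) [NeZero ℓ] (p : SizedPartition) : (core ℓ p).1 ≤ p.1 := by
  have := size_eq_core_add_quotient ℓ p
  omega

theorem mul_size_quotient_le (p : SizedPartition) (i : Fin ℓ) : ℓ * (quotient ℓ p i).1 ≤ p.1 := by
  rw [size_eq_core_add_quotient ℓ p]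
  exact (Nat.mul_le_mul_left ℓ (Finset.single_le_sum_of_canonicallyOrdered
    (f := fun i => (quotient ℓ p i).1) (Finset.mem_univ i))).trans (Nat.le_add_left ..)

end CoreQuotient
end SizedPartition

/-! ### Words and run lengths -/

section Words
variable {α β : Type*} {k : ℕ}

/-- A sequence over `β` together with a label in `α` for each of its terms is the same as a
sequence of labelled terms. -/
def labelledListEquiv (α β : Type*) : (Σ c : List β, Fin c.length → α) ≃ List (β × α) :=
  .symm <| calc List (β × α)
      ≃ Σ n, Fin n → β × α := List.equivSigmaTuple
    _ ≃ Σ n, Σ _ : Fin n → β, Fin n → α := .sigmaCongrRight fun _ =>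
        (Equiv.arrowProdEquivProdArrow _ _ _).trans (Equiv.sigmaEquivProd _ _).symm
    _ ≃ Σ x : Σ n, Fin n → β, Fin x.1 → α := (Equiv.sigmaAssoc fun n _ => Fin n → α).symm
    _ ≃ Σ c : List β, Fin c.length → α :=
        (Equiv.sigmaCongrLeft (β := fun x => Fin x.1 → α) List.equivSigmaTuple).symm

theorem labelledListEquiv_apply (x : Σ c : List β, Fin c.length → α) :
    labelledListEquiv α β x = List.ofFn fun i => (x.1.get i, x.2 i) := rfl

theorem map_fst_labelledListEquiv (x : Σ c : List β, Fin c.length → α) :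
    (labelledListEquiv α β x).map Prod.fst = x.1 := by
  rw [labelledListEquiv_apply, List.map_ofFn]
  exact List.ofFn_get x.1

/-- The run-length encoding of a word over `Option α`: the number of leading letters `none`, and,
for each letter `some x`, the length of the block formed by this letter and the letters `none`
following it. -/
def runs : List (Option α) → ℕ × List (ℕ+ × α)
  | [] => (0, [])
  | none :: t => ((runs t).1 + 1, (runs t).2)
  | some x :: t => (0, ((runs t).1.succPNat, x) :: (runs t).2)

/-- The word over `Option α` with a given run-length encoding. -/
def ofRuns : ℕ → List (ℕ+ × α) → List (Option α)
  | 0, [] => []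
  | 0, (c, x) :: L => some x :: ofRuns c.natPred L
  | a + 1, L => none :: ofRuns a L
  termination_by a L => (L.length, a)

theorem runs_ofRuns (a : ℕ) (L : List (ℕ+ × α)) : runs (ofRuns a L) = (a, L) := by
  fun_induction ofRuns a L <;> simp_all [runs]

theorem ofRuns_runs (t : List (Option α)) : ofRuns (runs t).1 (runs t).2 = t := by
  fun_induction runs t <;> simp_all [ofRuns]

theorem csum_cons (c : ℕ+) (l : List ℕ+) : csum (c :: l) = c + csum l := rfl

theorem length_ofRuns (a : ℕ) (L : List (ℕ+ × α)) :
    (ofRuns a L).length = a + csum (L.map Prod.fst) := by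
  fun_induction ofRuns a L with
  | case1 => rfl
  | case2 c x L ih =>
    rw [List.length_cons, ih, List.map_cons, csum_cons, ← PNat.natPred_add_one c]
    omega
  | case3 L a ih => rw [List.length_cons, ih]; omega

/-- Words over `k + 1` letters correspond to triples `(a, 𝔠, j)`: the runs of the letter `0` give
`a` and `𝔠`, and `j` records which of the `k` remaining letters separate them. -/
def wordEquiv (k : ℕ) :
    (ℕ × Σ c : List ℕ+, Fin (k ^ c.length)) ≃ List (Fin (k + 1)) := calc
  (ℕ × Σ c : List ℕ+, Fin (k ^ c.length))
    ≃ ℕ × List (ℕ+ × Fin k) := .prodCongr (.refl ℕ) <|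
        (Equiv.sigmaCongrRight fun _ => finFunctionFinEquiv.symm).trans (labelledListEquiv _ _)
  _ ≃ List (Option (Fin k)) := ⟨fun x => ofRuns x.1 x.2, runs, fun x => runs_ofRuns x.1 x.2,
        ofRuns_runs⟩
  _ ≃ List (Fin (k + 1)) := Equiv.listEquivOfEquiv (finSuccEquiv k).symm

theorem length_wordEquiv (i : ℕ × Σ c : List ℕ+, Fin (k ^ c.length)) :
    (wordEquiv k i).length = i.1 + csum i.2.1 := by
  refine List.length_map .. |>.trans (length_ofRuns ..) |>.trans ?_
  exact congrArg (i.1 + csum ·) (map_fst_labelledListEquiv _)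

end Words

/-! ### Core towers -/

open scoped ENNReal

section WeightedSize
variable {ι κ : Type*} {ℓ : ℕ}

/-- The total size `∑ ℓ ^ d i * |w i|` of a family of partitions whose indices have depths `d i`.
Values in `ℝ≥0∞` make the sum meaningful without assuming finite support. -/
noncomputable def weightedSize (ℓ : ℕ) (d : ι → ℕ) (w : ι → SizedPartition) : ℝ≥0∞ :=
  ∑' i, (ℓ : ℝ≥0∞) ^ d i * (w i).1

theorem weightedSize_comp_equiv (e : ι ≃ κ) (d : κ → ℕ) (w : κ → SizedPartition) :
    weightedSize ℓ (d ∘ e) (w ∘ e) = weightedSize ℓ d w :=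
  e.tsum_eq fun i => (ℓ : ℝ≥0∞) ^ d i * (w i).1

theorem tsum_natCast_eq_natCast_iff (f : ι → ℕ) (n : ℕ) :
    ∑' i, (f i : ℝ≥0∞) = n ↔ f.support.Finite ∧ ∑ᶠ i, f i = n := by
  have hfinsum (hf : f.support.Finite) : ∑' i, (f i : ℝ≥0∞) = (∑ᶠ i, f i : ℕ) := by
    rw [finsum_eq_sum f hf, Nat.cast_sum]
    exact tsum_eq_sum fun i hi => by simpa using hi
  constructor
  · intro h
    have hf : f.support.Finite := by
      refine (ENNReal.finite_const_le_of_tsum_ne_top (h ▸ ENNReal.natCast_ne_top n)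
        one_ne_zero).subset fun i hi => ?_
      exact Nat.one_le_cast (α := ℝ≥0∞).2 (Nat.one_le_iff_ne_zero.2 hi)
    exact ⟨hf, Nat.cast_injective (R := ℝ≥0∞) ((hfinsum hf).symm.trans h)⟩
  · rintro ⟨hf, rfl⟩
    exact hfinsum hf

theorem weightedSize_eq_natCast_iff (hℓ : ℓ ≠ 0) {d : ι → ℕ} {w : ι → SizedPartition} {n : ℕ} :
    weightedSize ℓ d w = n ↔ {i | (w i).1 ≠ 0}.Finite ∧ ∑ᶠ i, ℓ ^ d i * (w i).1 = n := by
  have hsupport : (fun i => ℓ ^ d i * (w i).1).support = {i | (w i).1 ≠ 0} := by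
    ext i
    simp [hℓ]
  rw [← hsupport, ← tsum_natCast_eq_natCast_iff]
  simp only [weightedSize, Nat.cast_mul, Nat.cast_pow]

theorem size_eq_zero_of_weightedSize_lt_one (hℓ : ℓ ≠ 0) {d : ι → ℕ}
    {w : ι → SizedPartition} (h : weightedSize ℓ d w < 1) (i : ι) : (w i).1 = 0 := by
  have hle : ((ℓ ^ d i * (w i).1 : ℕ) : ℝ≥0∞) < 1 := by
    push_cast
    exact (ENNReal.le_tsum i).trans_lt h
  have hzero : ℓ ^ d i * (w i).1 = 0 := Nat.lt_one_iff.1 (by exact_mod_cast hle)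
  exact (Nat.mul_eq_zero.1 hzero).resolve_left (pow_ne_zero _ hℓ)

/-- A list is empty or has a head and a tail. -/
def listConsEquiv (α : Type*) : Unit ⊕ α × List α ≃ List α where
  toFun := Sum.elim (fun _ => []) fun x => x.1 :: x.2
  invFun
    | [] => .inl ()
    | a :: t => .inr (a, t)
  left_inv := by rintro (_ | _) <;> rfl
  right_inv := by rintro (_ | _) <;> rfl

theorem tsum_list {α : Type*} [Fintype α] (f : List α → ℝ≥0∞) :
    ∑' t, f t = f [] + ∑ a, ∑' t, f (a :: t) := by
  rw [← (listConsEquiv α).tsum_eq, ENNReal.summable.tsum_sum ENNReal.summable, tsum_fintype,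
    Fintype.sum_unique]
  refine congrArg (f [] + ·) ?_
  rw [← tsum_fintype (L := .unconditional _)]
  exact ENNReal.tsum_prod (f := fun a t => f (a :: t))

theorem weightedSize_length (w : List (Fin ℓ) → SizedPartition) :
    weightedSize ℓ List.length w =
      (w []).1 + ℓ * ∑ i, weightedSize ℓ List.length fun t => w (i :: t) := by
  simp only [weightedSize, tsum_list (α := Fin ℓ) (fun t => (ℓ : ℝ≥0∞) ^ t.length * (w t).1),
    Finset.mul_sum, ← ENNReal.tsum_mul_left, List.length_nil, pow_zero, one_mul,
    List.length_cons, pow_succ', mul_assoc]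

theorem two_mul_weightedSize_subtree_le (hℓ : 2 ≤ ℓ) (w : List (Fin ℓ) → SizedPartition)
    (i : Fin ℓ) : 2 * weightedSize ℓ List.length (fun t => w (i :: t)) ≤
      weightedSize ℓ List.length w := by
  rw [weightedSize_length w]
  refine le_add_left (mul_le_mul' (by exact_mod_cast hℓ) ?_)
  exact Finset.single_le_sum_of_canonicallyOrdered
    (f := fun i => weightedSize ℓ List.length fun t => w (i :: t)) (Finset.mem_univ i)

end WeightedSize

namespace SizedPartition
section CoreTower
variable {ℓ : ℕ} [NeZero ℓ]

/-- The `ℓ`-core tower of a partition: its entry at the empty word is the `ℓ`-core, and the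
entries at the words starting with `i` form the `ℓ`-core tower of component `i` of the
`ℓ`-quotient. -/
noncomputable def coreTower (ℓ : ℕ) [NeZero ℓ] (p : SizedPartition) :
    List (Fin ℓ) → SizedPartition
  | [] => core ℓ p
  | i :: t => coreTower ℓ (quotient ℓ p i) t

theorem isCore_coreTower (p : SizedPartition) (t : List (Fin ℓ)) :
    IsCore ℓ (coreTower ℓ p t).2 := by
  induction t generalizing p with
  | nil => exact isCore_core p
  | cons i _ ih => exact ih _

theorem size_coreTower_le (p : SizedPartition) (t : List (Fin ℓ)) :
    (coreTower ℓ p t).1 ≤ p.1 := by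
  induction t generalizing p with
  | nil => exact size_core_le ℓ p
  | cons i t ih =>
    exact (ih _).trans ((Nat.le_mul_of_pos_left _ (NeZero.pos ℓ)).trans (mul_size_quotient_le p i))

theorem weightedSize_coreTower (hℓ : 2 ≤ ℓ) (p : SizedPartition) :
    weightedSize ℓ List.length (coreTower ℓ p) = p.1 := by
  induction hn : p.1 using Nat.strong_induction_on generalizing p with
  | _ n ih =>
    rcases Nat.eq_zero_or_pos n with rfl | hpos
    · have hzero (t : List (Fin ℓ)) : (coreTower ℓ p t).1 = 0 :=
        Nat.le_zero.1 (hn ▸ size_coreTower_le p t)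
      simp only [weightedSize, hzero, Nat.cast_zero, mul_zero, tsum_zero]
    · have hsub (i : Fin ℓ) : weightedSize ℓ List.length (coreTower ℓ (quotient ℓ p i)) =
          (quotient ℓ p i).1 := by
        have := Nat.mul_le_mul_right (quotient ℓ p i).1 hℓ
        have := mul_size_quotient_le p i
        exact ih _ (by omega) _ rfl
      rw [weightedSize_length, ← hn, size_eq_core_add_quotient ℓ p]
      simp only [coreTower, hsub, Nat.cast_add, Nat.cast_mul, Nat.cast_sum]

theorem coreTower_eq_iff {p : SizedPartition} {w : List (Fin ℓ) → SizedPartition} :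
    coreTower ℓ p = w ↔
      core ℓ p = w [] ∧ ∀ i, coreTower ℓ (quotient ℓ p i) = fun t => w (i :: t) := by
  refine ⟨?_, fun ⟨hcore, hquot⟩ => funext fun t => ?_⟩
  · rintro rfl
    exact ⟨rfl, fun i => rfl⟩
  · cases t with
    | nil => exact hcore
    | cons i t => exact congrFun (hquot i) t

theorem existsUnique_coreTower_eq (hℓ : 2 ≤ ℓ) {w : List (Fin ℓ) → SizedPartition}
    (hcore : ∀ t, IsCore ℓ (w t).2) (hw : weightedSize ℓ List.length w ≠ ∞) :
    ∃! p, coreTower ℓ p = w := by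
  obtain ⟨n, hn⟩ : ∃ n : ℕ, weightedSize ℓ List.length w < 2 ^ n := by
    obtain ⟨n, hn⟩ := ENNReal.exists_nat_gt hw
    exact ⟨n, hn.trans (by exact_mod_cast Nat.lt_two_pow_self)⟩
  clear hw
  -- Passing to a subtree at least halves the weighted size.
  induction n generalizing w with
  | zero =>
    rw [pow_zero] at hn
    have hzero (p : SizedPartition) (hp : p.1 = 0) : coreTower ℓ p = w := funext fun t =>
      eq_of_size_eq_zero (Nat.le_zero.1 (hp ▸ size_coreTower_le p t))
        (size_eq_zero_of_weightedSize_lt_one (NeZero.ne ℓ) hn t)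
    refine ⟨⟨0, default⟩, hzero _ rfl, fun q hq => eq_of_size_eq_zero ?_ rfl⟩
    rw [← hq, weightedSize_coreTower hℓ] at hn
    exact Nat.lt_one_iff.1 (by exact_mod_cast hn)
  | succ n ih =>
    have hsub (i : Fin ℓ) : ∃! p, coreTower ℓ p = fun t => w (i :: t) := by
      refine ih (fun t => hcore _) ?_
      have := (two_mul_weightedSize_subtree_le hℓ w i).trans_lt hn
      rw [pow_succ, mul_comm] at this
      exact lt_of_mul_lt_mul_right' this
    choose μ hμ hμ_unique using hsub
    obtain ⟨p, hp, hp_unique⟩ := existsUnique_core_quotient (hcore []) μ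
    refine ⟨p, coreTower_eq_iff.2 ⟨hp.1, fun i => by rw [hp.2]; exact hμ i⟩, fun q hq => ?_⟩
    obtain ⟨hq_core, hq_quot⟩ := coreTower_eq_iff.1 hq
    exact hp_unique q ⟨hq_core, funext fun i => hμ_unique i _ (hq_quot i)⟩

end CoreTower
end SizedPartition

section Count
variable {ι κ : Type*} {ℓ : ℕ} [NeZero ℓ] {n : ℕ}

/-- The finitely supported families of `ℓ`-cores of total size `∑ ℓ ^ d i * |w i| = n`. -/
def coreFamilies (ℓ : ℕ) (d : ι → ℕ) (n : ℕ) : Set (ι → SizedPartition) :=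
  {w | (∀ i, IsCore ℓ (w i).2) ∧ {i | (w i).1 ≠ 0}.Finite ∧ ∑ᶠ i, ℓ ^ d i * (w i).1 = n}

theorem mem_coreFamilies_iff {d : ι → ℕ} {w : ι → SizedPartition} :
    w ∈ coreFamilies ℓ d n ↔ (∀ i, IsCore ℓ (w i).2) ∧ weightedSize ℓ d w = n :=
  and_congr_right' (weightedSize_eq_natCast_iff (NeZero.ne ℓ)).symm

theorem ncard_coreFamilies_comp_equiv (e : ι ≃ κ) (d : κ → ℕ) (n : ℕ) :
    (coreFamilies ℓ (d ∘ e) n).ncard = (coreFamilies ℓ d n).ncard := by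
  have hpreimage : coreFamilies ℓ d n =
      (e.symm.arrowCongr (.refl SizedPartition)) ⁻¹' coreFamilies ℓ (d ∘ e) n := by
    ext w
    rw [Set.mem_preimage, mem_coreFamilies_iff, mem_coreFamilies_iff,
      ← weightedSize_comp_equiv e]
    exact and_congr_left' e.surjective.forall
  rw [hpreimage, Set.ncard_preimage_of_injective_subset_range (Equiv.injective _) (by simp)]

theorem bijOn_coreTower (hℓ : 2 ≤ ℓ) (n : ℕ) :
    Set.BijOn (SizedPartition.coreTower ℓ) {p | p.1 = n} (coreFamilies ℓ List.length n) := by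
  refine ⟨?_, ?_, ?_⟩
  · rintro p rfl
    exact mem_coreFamilies_iff.2
      ⟨SizedPartition.isCore_coreTower p, SizedPartition.weightedSize_coreTower hℓ p⟩
  · exact fun p _ q _ h => (SizedPartition.existsUnique_coreTower_eq hℓ
      (SizedPartition.isCore_coreTower p) (SizedPartition.weightedSize_coreTower hℓ p ▸
        ENNReal.natCast_ne_top _)).unique rfl h.symm
  · intro w hw
    obtain ⟨hcore, hw⟩ := mem_coreFamilies_iff.1 hw
    obtain ⟨p, rfl, -⟩ := SizedPartition.existsUnique_coreTower_eq hℓ hcore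
      (hw ▸ ENNReal.natCast_ne_top n)
    rw [SizedPartition.weightedSize_coreTower hℓ] at hw
    exact ⟨p, Nat.cast_injective hw, rfl⟩

theorem ncard_size_eq (n : ℕ) :
    {p : SizedPartition | p.1 = n}.ncard = Fintype.card n.Partition := by
  rw [← Nat.card_eq_fintype_card, ← Set.ncard_range_of_injective (sigma_mk_injective (i := n)),
    Set.range_sigmaMk]
  rfl

theorem ncard_coreFamilies_length (hℓ : 2 ≤ ℓ) (n : ℕ) :
    (coreFamilies ℓ (List.length (α := Fin ℓ)) n).ncard = Fintype.card n.Partition := by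
  rw [← (bijOn_coreTower hℓ n).ncard_eq, ncard_size_eq]

end Count

theorem weight_count_U_n_general (ℓ : ℕ) (hℓ : 2 ≤ ℓ) (n : ℕ) :
    Set.ncard { w : (ℕ × Σ c : List ℕ+, Fin ((ℓ - 1) ^ c.length)) → Σ m : ℕ, Nat.Partition m |
      (∀ i, IsCore ℓ (w i).2) ∧
      { i | (w i).1 ≠ 0 }.Finite ∧
      ∑ᶠ i : ℕ × Σ c : List ℕ+, Fin ((ℓ - 1) ^ c.length),
        ℓ ^ (i.1 + csum i.2.1) * (w i).1 = n } =
    Fintype.card (Nat.Partition n) := by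
  obtain ⟨k, rfl⟩ := Nat.exists_eq_add_one_of_ne_zero (show ℓ ≠ 0 by omega)
  have hdepth : (fun i : ℕ × Σ c : List ℕ+, Fin (k ^ c.length) => i.1 + csum i.2.1) =
      List.length ∘ wordEquiv k := funext fun i => (length_wordEquiv i).symm
  change (coreFamilies (k + 1) (fun i : ℕ × Σ c : List ℕ+, Fin (k ^ c.length) =>
    i.1 + csum i.2.1) n).ncard = _
  rw [hdepth, ncard_coreFamilies_comp_equiv, ncard_coreFamilies_length hℓ]

/-- Let `ℓ` be a prime and `n` a natural number.  The number of finitely supported functions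
`w` assigning to each triple `(a, 𝔠, j)` — with `a ∈ ℕ`, `𝔠 ∈ 𝒞` a finite sequence of
positive integers, and `j` ranging over `(ℓ-1)^{t(𝔠)}` values — an `ℓ`-core partition
`w (a, 𝔠, j)`, subject to `∑ ℓ^{a + |𝔠|} * |w (a, 𝔠, j)| = n`, equals the number of
partitions of `n`. -/
theorem weight_count_U_n (ℓ : ℕ) (hℓ : ℓ.Prime) (n : ℕ) :
    Set.ncard { w : (ℕ × Σ c : List ℕ+, Fin ((ℓ - 1) ^ c.length)) → Σ m : ℕ, Nat.Partition m |
      (∀ i, IsCore ℓ (w i).2) ∧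
      { i | (w i).1 ≠ 0 }.Finite ∧
      ∑ᶠ i : ℕ × Σ c : List ℕ+, Fin ((ℓ - 1) ^ c.length),
        ℓ ^ (i.1 + csum i.2.1) * (w i).1 = n } =
    Fintype.card (Nat.Partition n) := by
  exact weight_count_U_n_general ℓ hℓ.two_le n
end

section
/- For every natural number n, the number of finitely supported functions f: ℕ × 𝒞 → ℕ such that every value of f is a triangular number and Σ_{(a,𝔠)} 2^{a+|𝔠|} · f(a,𝔠) = n is equal to the number of partitions of n. -/
/-- A natural number is triangular if it is of the form `k * (k + 1) / 2`. -/
def IsTriangular (m : ℕ) : Prop := ∃ k : ℕ, m = k * (k + 1) / 2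

/-!
Let `P` be the generating function of partitions and `ψ = ∑ X ^ (j * (j + 1) / 2)`. Gauss's
identity `ψ * ∏ (1 - X ^ (2 * k + 1)) = ∏ (1 - X ^ (2 * k + 2))`, together with Euler's product for
`P`, gives `P(X) = ψ(X) * P(X ^ 2) ^ 2`. Iterating, `P(X) = ∏ ψ(X ^ (2 ^ m)) ^ (2 ^ m)`. Since
exactly `2 ^ m` of the pairs `(a, 𝔠)` satisfy `a + |𝔠| = m` (they are the compositions of `m + 1`,
with first part `a + 1`), the coefficients of this product count the functions in question.

Gauss's identity is obtained from a finite version due to Shanks (*Two theorems of Gauss*, 1958),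
whose induction step is a telescoping sum.
-/

namespace TriangularPartitions

open Finset Filter PowerSeries
open scoped PowerSeries.WithPiTopology Topology

variable {R : Type*} [CommRing R]

section Shanks

variable (q : R)

/-- The `s`-th summand on the right-hand side of Shanks's identity of order `n`, multiplied by
`∏ k < n, (1 - q ^ (2 * k + 1))` so that no division is needed. -/
def shanksTerm (n s : ℕ) : R :=
  q ^ (s * (2 * n + 1)) * (∏ k ∈ range s, (1 - q ^ (2 * k + 1))) *
    ∏ k ∈ Ico s n, (1 - q ^ (2 * k + 2))

lemma shanksTerm_zero_right (n : ℕ) :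
    shanksTerm q n 0 = ∏ k ∈ range n, (1 - q ^ (2 * k + 2)) := by
  simp [shanksTerm]

lemma shanksTerm_self (n : ℕ) :
    shanksTerm q n n = q ^ (n * (2 * n + 1)) * ∏ k ∈ range n, (1 - q ^ (2 * k + 1)) := by
  simp [shanksTerm]

lemma shanksTerm_succ_left {n s : ℕ} (h : s ≤ n) :
    shanksTerm q (n + 1) s = q ^ (2 * s) * (1 - q ^ (2 * n + 2)) * shanksTerm q n s := by
  rw [shanksTerm, shanksTerm, prod_Ico_succ_top h]
  ring

lemma one_sub_mul_shanksTerm_succ_right {n s : ℕ} (h : s < n) :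
    (1 - q ^ (2 * s + 2)) * shanksTerm q n (s + 1) =
      q ^ (2 * n + 1) * (1 - q ^ (2 * s + 1)) * shanksTerm q n s := by
  rw [shanksTerm, shanksTerm, prod_range_succ, prod_eq_prod_Ico_succ_bot h]
  ring

lemma sum_shanksTerm_succ_left (n : ℕ) :
    ∑ s ∈ range n, shanksTerm q (n + 1) s =
      (1 - q ^ (2 * n + 1)) * ∑ s ∈ range n, shanksTerm q n s +
        (1 - q ^ (2 * n)) * shanksTerm q n n := by
  have telescope : ∀ s ∈ range n,
      shanksTerm q (n + 1) s - (1 - q ^ (2 * n + 1)) * shanksTerm q n s =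
        (1 - q ^ (2 * (s + 1))) * shanksTerm q n (s + 1) -
          (1 - q ^ (2 * s)) * shanksTerm q n s := by
    intro s hs
    have hs := mem_range.1 hs
    rw [shanksTerm_succ_left q hs.le, mul_add_one, one_sub_mul_shanksTerm_succ_right q hs]
    ring
  have h := sum_congr rfl telescope
  rw [sum_range_sub (fun s ↦ (1 - q ^ (2 * s)) * shanksTerm q n s), sum_sub_distrib, ← mul_sum] at h
  simp only [mul_zero, pow_zero, sub_self, zero_mul, sub_zero] at h
  exact sub_eq_iff_eq_add'.1 h

lemma pow_dvd_sum_shanksTerm_sub_prod (n : ℕ) :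
    q ^ n ∣ ∑ s ∈ range n, shanksTerm q n s - ∏ k ∈ range n, (1 - q ^ (2 * k + 2)) := by
  cases n with
  | zero => simp
  | succ n =>
    rw [sum_range_succ', shanksTerm_zero_right, add_sub_cancel_right]
    refine dvd_sum fun s _ ↦ ((pow_dvd_pow q ?_).mul_right _).mul_right _
    nlinarith

theorem prod_odd_mul_sum_triangular (n : ℕ) :
    (∏ k ∈ range n, (1 - q ^ (2 * k + 1))) * ∑ j ∈ range (2 * n), q ^ (j * (j + 1) / 2) =
      ∑ s ∈ range n, shanksTerm q n s := by
  induction n with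
  | zero => simp
  | succ n ih =>
    have even_exponent : 2 * n * (2 * n + 1) / 2 = n * (2 * n + 1) := by
      rw [mul_assoc, Nat.mul_div_cancel_left _ two_pos]
    have odd_exponent : (2 * n + 1) * (2 * n + 1 + 1) / 2 = n * (2 * n + 1) + (2 * n + 1) := by
      rw [show (2 * n + 1) * (2 * n + 1 + 1) = 2 * (n * (2 * n + 1) + (2 * n + 1)) by ring,
        Nat.mul_div_cancel_left _ two_pos]
    rw [sum_range_succ _ n, sum_shanksTerm_succ_left, ← ih, shanksTerm_succ_left q le_rfl,
      shanksTerm_self, mul_add_one, sum_range_succ, sum_range_succ, even_exponent, odd_exponent,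
      prod_range_succ]
    ring

end Shanks

section SetSeries

variable (R) in
/-- The generating function `∑ m ∈ T, X ^ m` of a set `T` of natural numbers. -/
noncomputable def setSeries (T : Set ℕ) : R⟦X⟧ :=
  .mk (T.indicator 1)

lemma hasSum_X_pow_setSeries_range [TopologicalSpace R] {ι : Type*} {a : ι → ℕ}
    (ha : Function.Injective a) :
    HasSum (fun i ↦ (X : R⟦X⟧) ^ a i) (setSeries R (Set.range a)) := by
  have h := (setSeries R (Set.range a)).hasSum_of_monomials_self
  rw [← ha.hasSum_iff fun m hm ↦ by simp [setSeries, hm]] at h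
  convert h using 2 with i
  simp [setSeries, X_pow_eq]

lemma expand_setSeries {p : ℕ} (hp : p ≠ 0) (T : Set ℕ) :
    expand p hp (setSeries R T) = setSeries R ((p * ·) '' T) := by
  ext m
  by_cases hm : p ∣ m
  · obtain ⟨k, rfl⟩ := hm
    rw [coeff_expand_mul, setSeries, setSeries, coeff_mk, coeff_mk]
    exact (Set.indicator_image (f := (1 : ℕ → R)) (g := (p * ·)) (mul_right_injective₀ hp)).symm
  · rw [coeff_expand_of_not_dvd p hp _ hm, setSeries, coeff_mk, Set.indicator_of_notMem]
    rintro ⟨k, -, rfl⟩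
    exact hm (dvd_mul_right p k)

open scoped Classical in
lemma coeff_prod_setSeries {ι : Type*} (T : ι → Set ℕ) (s : Finset ι) (n : ℕ) :
    coeff n (∏ i ∈ s, setSeries R (T i)) = #{l ∈ s.finsuppAntidiag n | ∀ i ∈ s, l i ∈ T i} := by
  simp [coeff_prod, setSeries, Set.indicator_apply, prod_ite_zero]

end SetSeries

section WeightedSums

variable {ι : Type*} {w f : ι → ℕ} {n : ℕ}

lemma eq_zero_of_finsum_mul_lt (hf : f.support.Finite) {i : ι} (h : ∑ᶠ j, w j * f j < w i) :
    f i = 0 := by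
  by_contra hi
  have hsupp : (Function.support fun j ↦ w j * f j).Finite :=
    hf.subset (Function.support_mul_subset_right w f)
  have := single_le_finsum i hsupp fun _ ↦ Nat.zero_le _
  exact (h.trans_le (Nat.le_mul_of_pos_right _ (Nat.pos_of_ne_zero hi))).not_ge this

open scoped Classical in
lemma image_setOf_finsum_mul_eq {T : Set ℕ} (hT : 0 ∈ T) {s : Finset ι} (hs : ∀ i ∉ s, n < w i) :
    (fun f i ↦ w i * f i) ''
        {f : ι → ℕ | (∀ i, f i ∈ T) ∧ f.support.Finite ∧ ∑ᶠ i, w i * f i = n} =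
      (⇑) '' {l ∈ s.finsuppAntidiag n | ∀ i ∈ s, l i ∈ (w i * ·) '' T} := by
  have finsum_eq {f : ι → ℕ} (hf : ∀ i ∉ s, f i = 0) : ∑ᶠ i, w i * f i = ∑ i ∈ s, w i * f i :=
    finsum_eq_sum_of_support_subset _ fun i hi ↦ by_contra fun his ↦ hi (by simp [hf i his])
  ext g
  constructor
  · rintro ⟨f, ⟨hfT, hfin, hsum⟩, rfl⟩
    have hf : ∀ i ∉ s, f i = 0 := fun i hi ↦ eq_zero_of_finsum_mul_lt hfin (hsum.trans_lt (hs i hi))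
    refine ⟨Finsupp.onFinset s (fun i ↦ w i * f i) fun i hi ↦ by_contra fun his ↦
      hi (by simp [hf i his]), ⟨?_, fun i _ ↦ ⟨f i, hfT i, rfl⟩⟩, rfl⟩
    exact mem_finsuppAntidiag.2 ⟨(finsum_eq hf).symm.trans hsum, Finsupp.support_onFinset_subset⟩
  · rintro ⟨l, ⟨hl, hlT⟩, rfl⟩
    obtain ⟨hsum, hsupp⟩ := mem_finsuppAntidiag.1 hl
    have hl0 : ∀ i ∉ s, l i = 0 := fun i hi ↦ Finsupp.notMem_support_iff.1 fun h ↦ hi (hsupp h)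
    have hquot : ∀ i, ∃ t ∈ T, w i * t = l i := fun i ↦
      if hi : i ∈ s then hlT i hi else ⟨0, hT, (hl0 i hi).symm⟩
    choose f hfT hfl using hquot
    have hf : ∀ i ∉ s, f i = 0 := fun i hi ↦
      (mul_eq_zero.1 ((hfl i).trans (hl0 i hi))).resolve_left (Nat.ne_zero_of_lt (hs i hi))
    refine ⟨f, ⟨hfT, s.finite_toSet.subset fun i hi ↦ by_contra fun his ↦ hi (hf i his), ?_⟩,
      funext hfl⟩
    rw [finsum_eq hf, ← hsum]
    exact sum_congr rfl fun i _ ↦ hfl i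

theorem ncard_finsum_mul_eq_coeff_prod_expand {T : Set ℕ} (hT : 0 ∈ T) (hw : ∀ i, w i ≠ 0)
    {s : Finset ι} (hs : ∀ i ∉ s, n < w i) :
    ({f : ι → ℕ | (∀ i, f i ∈ T) ∧ f.support.Finite ∧ ∑ᶠ i, w i * f i = n}.ncard : R) =
      coeff n (∏ i ∈ s, expand (w i) (hw i) (setSeries R T)) := by
  classical
  have hinj : Function.Injective fun (f : ι → ℕ) i ↦ w i * f i := fun f g h ↦
    funext fun i ↦ mul_left_cancel₀ (hw i) (congrFun h i)
  simp_rw [expand_setSeries]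
  rw [coeff_prod_setSeries, ← Set.ncard_image_of_injective _ hinj, image_setOf_finsum_mul_eq hT hs,
    Set.ncard_image_of_injective _ DFunLike.coe_injective, ← Set.ncard_coe_finset, coe_filter]

lemma prod_comp_eq_prod_pow_card_fiber {M : Type*} [CommMonoid M] (F : ℕ → M) {s : Finset ι}
    (hs : ∀ i, i ∈ s ↔ w i < n) :
    ∏ i ∈ s, F (w i) = ∏ m ∈ range n, F m ^ Nat.card {i // w i = m} := by
  rw [← prod_fiberwise_of_maps_to' fun i hi ↦ mem_range.2 ((hs i).1 hi)]
  refine prod_congr rfl fun m hm ↦ ?_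
  have mem_filter_iff (i : ι) : i ∈ {i ∈ s | w i = m} ↔ w i = m := by
    rw [mem_filter, hs, and_iff_right_of_imp fun hi ↦ hi ▸ mem_range.1 hm]
  rw [prod_const, Nat.subtype_card _ mem_filter_iff]

end WeightedSums

section Iteration

variable {F g : R⟦X⟧} {b c : ℕ}

lemma prod_expand_pow_mul_expand_pow (hb : b ≠ 0) (h : F = g * expand b hb F ^ c) (M : ℕ) :
    (∏ m ∈ range M, expand (b ^ m) (pow_ne_zero m hb) g ^ c ^ m) *
      expand (b ^ M) (pow_ne_zero M hb) F ^ c ^ M = F := by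
  induction M with
  | zero => simp
  | succ M ih =>
    have hM : expand (b ^ M) (pow_ne_zero M hb) F = expand (b ^ M) (pow_ne_zero M hb) g *
        expand (b ^ (M + 1)) (pow_ne_zero (M + 1) hb) F ^ c := by
      conv_lhs => rw [h, map_mul, map_pow, ← expand_mul]
      rfl
    rw [prod_range_succ, mul_assoc, pow_succ' c, pow_mul, ← mul_pow, ← hM, ih]

lemma X_pow_dvd_expand_sub_one (hF : constantCoeff F = 1) {p : ℕ} (hp : p ≠ 0) :
    X ^ p ∣ expand p hp F - 1 := by
  have hX : X ∣ F - 1 := X_dvd_iff.2 (by simp [hF])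
  simpa using map_dvd (expand p hp) hX

theorem coeff_prod_expand_pow (hb : b ≠ 0) (h : F = g * expand b hb F ^ c)
    (hF : constantCoeff F = 1) {n M : ℕ} (hn : n < b ^ M) :
    coeff n (∏ m ∈ range M, expand (b ^ m) (pow_ne_zero m hb) g ^ c ^ m) = coeff n F := by
  have hdvd : X ^ b ^ M ∣ expand (b ^ M) (pow_ne_zero M hb) F ^ c ^ M - 1 :=
    (X_pow_dvd_expand_sub_one hF _).trans (sub_one_dvd_pow_sub_one _ _)
  have hF_sub := hdvd.mul_left (∏ m ∈ range M, expand (b ^ m) (pow_ne_zero m hb) g ^ c ^ m)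
  rw [mul_sub_one, prod_expand_pow_mul_expand_pow hb h] at hF_sub
  exact (sub_eq_zero.1 ((map_sub _ _ _).symm.trans (X_pow_dvd_iff.1 hF_sub n hn))).symm

end Iteration

section Gauss

lemma strictMono_triangular : StrictMono fun j : ℕ ↦ j * (j + 1) / 2 := by
  refine strictMono_nat_of_lt_succ fun j ↦ ?_
  have := Nat.triangle_succ (j + 1)
  simp only [Nat.add_sub_cancel, mul_comm] at this ⊢
  omega

lemma setOf_isTriangular : {m | IsTriangular m} = Set.range fun j : ℕ ↦ j * (j + 1) / 2 := by
  ext m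
  simp [IsTriangular, eq_comm]

variable (R) in
/-- The generating function `ψ` of the triangular numbers. -/
noncomputable def triangularSeries : R⟦X⟧ :=
  setSeries R {m | IsTriangular m}

variable (R) in
/-- The generating function `P` of the numbers of partitions. -/
noncomputable def partitionSeries : R⟦X⟧ :=
  .mk fun n ↦ (Fintype.card n.Partition : R)

lemma constantCoeff_partitionSeries : constantCoeff (partitionSeries R) = 1 := by
  simp [partitionSeries, ← coeff_zero_eq_constantCoeff_apply]

section Topology

variable [TopologicalSpace R]

lemma hasSum_triangularSeries :
    HasSum (fun j : ℕ ↦ (X : R⟦X⟧) ^ (j * (j + 1) / 2)) (triangularSeries R) := by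
  rw [triangularSeries, setOf_isTriangular]
  exact hasSum_X_pow_setSeries_range strictMono_triangular.injective

lemma multipliable_one_sub_X_pow_comp {a : ℕ → ℕ} (ha : StrictMono a) :
    Multipliable fun k ↦ (1 : R⟦X⟧) - X ^ a k := by
  nontriviality R
  simp_rw [sub_eq_add_neg]
  apply WithPiTopology.multipliable_one_add_of_tendsto_order_atTop_nhds_top
  simp_rw [order_neg, order_X_pow]
  exact ENat.tendsto_natCast_nhds_top.comp ha.tendsto_atTop

lemma continuous_expand {p : ℕ} (hp : p ≠ 0) :
    Continuous (expand p hp : R⟦X⟧ →ₐ[R] R⟦X⟧) := by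
  refine continuous_iff_continuousAt.2 fun φ ↦
    (WithPiTopology.tendsto_iff_coeff_tendsto R _ _ _).2 fun m ↦ ?_
  simp only [coeff_expand]
  split_ifs
  · exact (WithPiTopology.continuous_coeff R _).tendsto φ
  · exact tendsto_const_nhds

lemma tendsto_of_X_pow_dvd_sub {u v : ℕ → R⟦X⟧} {φ : R⟦X⟧} (hv : Tendsto v atTop (𝓝 φ))
    (huv : ∀ n, X ^ n ∣ u n - v n) : Tendsto u atTop (𝓝 φ) := by
  rw [WithPiTopology.tendsto_iff_coeff_tendsto] at hv ⊢
  refine fun d ↦ (hv d).congr' ?_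
  filter_upwards [eventually_gt_atTop d] with n hn
  exact (sub_eq_zero.1 (by simpa using X_pow_dvd_iff.1 (huv n) d hn)).symm

lemma tendsto_sum_shanksTerm :
    Tendsto (fun n ↦ ∑ s ∈ range n, shanksTerm (X : R⟦X⟧) n s) atTop
      (𝓝 (∏' k, (1 - X ^ (2 * k + 2)))) := by
  have hprod := (multipliable_one_sub_X_pow_comp (R := R) (a := fun k ↦ 2 * k + 2)
    fun _ _ h ↦ by simpa using h).tendsto_prod_tprod_nat
  exact tendsto_of_X_pow_dvd_sub hprod (pow_dvd_sum_shanksTerm_sub_prod X)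

variable [IsTopologicalRing R] [T2Space R]

theorem triangularSeries_mul_tprod_odd :
    triangularSeries R * ∏' k, (1 - X ^ (2 * k + 1)) = ∏' k, (1 - X ^ (2 * k + 2)) := by
  have hodd := (multipliable_one_sub_X_pow_comp (R := R) (a := fun k ↦ 2 * k + 1)
    fun _ _ h ↦ by simpa using h).tendsto_prod_tprod_nat
  have htri := (hasSum_triangularSeries (R := R)).tendsto_sum_nat.comp
    (tendsto_id.const_mul_atTop' two_pos)
  rw [mul_comm]
  refine tendsto_nhds_unique ((hodd.mul htri).congr fun n ↦ ?_) tendsto_sum_shanksTerm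
  exact prod_odd_mul_sum_triangular X n

theorem partitionSeries_mul_tprod :
    partitionSeries R * ∏' k, (1 - X ^ (k + 1)) = 1 := by
  have hP : HasProd (fun i ↦ ∑' j : ℕ, X ^ ((i + 1) * j)) (partitionSeries R) := by
    simpa [Nat.Partition.restricted, partitionSeries] using
      Nat.Partition.hasProd_powerSeriesMk_card_restricted R fun _ ↦ True
  have geometric (i : ℕ) : (∑' j : ℕ, (X : R⟦X⟧) ^ ((i + 1) * j)) * (1 - X ^ (i + 1)) = 1 := by
    simp_rw [pow_mul]
    exact WithPiTopology.tsum_pow_mul_one_sub_of_constantCoeff_eq_zero (by simp)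
  have h := hP.mul (WithPiTopology.multipliable_one_sub_X_pow R).hasProd
  simp_rw [geometric] at h
  exact h.unique hasProd_one

lemma tprod_odd_mul_tprod_even :
    (∏' k, (1 - X ^ (2 * k + 1))) * ∏' k, (1 - X ^ (2 * k + 2)) =
      (∏' k, (1 - X ^ (k + 1)) : R⟦X⟧) :=
  tprod_even_mul_odd (f := fun k ↦ (1 - X ^ (k + 1) : R⟦X⟧))
    (multipliable_one_sub_X_pow_comp fun _ _ h ↦ by simpa using h)
    (multipliable_one_sub_X_pow_comp fun _ _ h ↦ by simpa using h)

lemma expand_two_partitionSeries_mul_tprod_even :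
    expand 2 two_ne_zero (partitionSeries R) * ∏' k, (1 - X ^ (2 * k + 2)) = 1 := by
  have h := congrArg (expand 2 two_ne_zero) (partitionSeries_mul_tprod (R := R))
  rw [map_mul, map_one, (WithPiTopology.multipliable_one_sub_X_pow R).map_tprod _
    (continuous_expand two_ne_zero)] at h
  simpa [← pow_mul, mul_add] using h

end Topology

theorem partitionSeries_eq_triangularSeries_mul_expand_sq :
    partitionSeries R = triangularSeries R * expand 2 two_ne_zero (partitionSeries R) ^ 2 := by
  let _ : TopologicalSpace R := ⊥
  have _ : DiscreteTopology R := ⟨rfl⟩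
  have gauss := triangularSeries_mul_tprod_odd (R := R)
  have split := tprod_odd_mul_tprod_even (R := R)
  have euler := partitionSeries_mul_tprod (R := R)
  have euler_even := expand_two_partitionSeries_mul_tprod_even (R := R)
  rw [← split] at euler
  generalize (∏' k, (1 - X ^ (2 * k + 1)) : R⟦X⟧) = odd at *
  generalize (∏' k, (1 - X ^ (2 * k + 2)) : R⟦X⟧) = even at *
  generalize expand 2 two_ne_zero (partitionSeries R) = P₂ at *
  calc partitionSeries R
      = partitionSeries R * (P₂ * even) ^ 2 := by rw [euler_even, one_pow, mul_one]
    _ = partitionSeries R * (triangularSeries R * odd) * even * P₂ ^ 2 := by rw [gauss]; ring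
    _ = triangularSeries R * P₂ ^ 2 * (partitionSeries R * (odd * even)) := by ring
    _ = triangularSeries R * P₂ ^ 2 := by rw [euler, mul_one]

end Gauss

section Indices

-- The coercion in `csum` elaborates to a monadic bind over `List`, so this is not `rfl`.
lemma csum_eq_sum_map_coe (c : List ℕ+) : csum c = (c.map PNat.val).sum := by
  simp [csum, List.map_eq_flatMap]

/-- The composition `(a + 1, c₁, …, c_t)` of `m + 1` attached to a pair `(a, 𝔠)` with
`a + |𝔠| = m`. -/
def toComposition {m : ℕ} (i : {i : ℕ × List ℕ+ // i.1 + csum i.2 = m}) : Composition (m + 1) where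
  blocks := (i.1.1 + 1) :: i.1.2.map PNat.val
  blocks_pos := by simp +contextual [forall_eq_or_imp]
  blocks_sum := by
    rw [List.sum_cons, add_right_comm, Nat.succ_inj, ← csum_eq_sum_map_coe]
    exact i.2

lemma toComposition_bijective (m : ℕ) : Function.Bijective (toComposition (m := m)) := by
  constructor
  · rintro ⟨⟨a, c⟩, _⟩ ⟨⟨b, d⟩, _⟩ h
    obtain ⟨hab, hcd⟩ := List.cons_eq_cons.1 (congrArg Composition.blocks h)
    exact Subtype.ext (Prod.ext (Nat.succ_injective hab) (PNat.coe_injective.list_map hcd))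
  · rintro ⟨_ | ⟨b, l⟩, hpos, hsum⟩
    · simp at hsum
    · obtain ⟨a, rfl⟩ := Nat.exists_eq_add_one_of_ne_zero (hpos List.mem_cons_self).ne'
      lift l to List ℕ+ using fun x hx ↦ hpos (List.mem_cons_of_mem _ hx)
      refine ⟨⟨(a, l), ?_⟩, rfl⟩
      rw [List.sum_cons, add_right_comm, Nat.succ_inj, ← csum_eq_sum_map_coe] at hsum
      exact hsum

lemma card_add_csum_eq (m : ℕ) :
    Nat.card {i : ℕ × List ℕ+ // i.1 + csum i.2 = m} = 2 ^ m := by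
  rw [Nat.card_eq_of_bijective _ (toComposition_bijective m), Nat.card_eq_fintype_card,
    composition_card, Nat.add_sub_cancel]

end Indices

end TriangularPartitions

open TriangularPartitions Finset PowerSeries in
theorem triangular_valued_count_eq_partitions_general {ι : Type*} (w : ι → ℕ)
    (hw : ∀ m, Nat.card {i // w i = m} = 2 ^ m) (n : ℕ) :
    Set.ncard { f : ι → ℕ |
      (∀ i, IsTriangular (f i)) ∧
      (Function.support f).Finite ∧
      ∑ᶠ i, 2 ^ w i * f i = n } =
    Fintype.card (Nat.Partition n) := by
  have hfin : {i | w i < n}.Finite := (Set.finite_Iio n).preimage' fun m _ ↦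
    Nat.finite_of_card_ne_zero (hw m ▸ pow_ne_zero m two_ne_zero)
  let s := hfin.toFinset
  have hs (i : ι) : i ∈ s ↔ w i < n := hfin.mem_toFinset
  have hlarge : ∀ i ∉ s, n < 2 ^ w i := fun i hi ↦
    (not_lt.1 (mt (hs i).2 hi)).trans_lt Nat.lt_two_pow_self
  have h2 (m : ℕ) : 2 ^ m ≠ 0 := pow_ne_zero m two_ne_zero
  refine Nat.cast_injective (R := ℤ) ?_
  calc _ = coeff n (∏ i ∈ s, expand (2 ^ w i) (h2 _) (triangularSeries ℤ)) :=
        ncard_finsum_mul_eq_coeff_prod_expand (T := {m | IsTriangular m}) ⟨0, rfl⟩ _ hlarge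
    _ = coeff n (∏ m ∈ range n, expand (2 ^ m) (h2 m) (triangularSeries ℤ) ^ 2 ^ m) := by
        simpa only [hw] using congrArg (coeff n)
          (prod_comp_eq_prod_pow_card_fiber (fun m ↦ expand (2 ^ m) (h2 m) (triangularSeries ℤ)) hs)
    _ = coeff n (partitionSeries ℤ) :=
        coeff_prod_expand_pow two_ne_zero partitionSeries_eq_triangularSeries_mul_expand_sq
          constantCoeff_partitionSeries Nat.lt_two_pow_self
    _ = Fintype.card n.Partition := coeff_mk _ _

/-- For every natural number `n`, the number of finitely supported functions
`f : ℕ × 𝒞 → ℕ` all of whose values are triangular numbers and which satisfy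
`∑ 2^{a + |𝔠|} * f (a, 𝔠) = n` equals the number of partitions of `n`. -/
theorem triangular_valued_count_eq_partitions (n : ℕ) :
    Set.ncard { f : ℕ × List ℕ+ → ℕ |
      (∀ i, IsTriangular (f i)) ∧
      (Function.support f).Finite ∧
      ∑ᶠ i : ℕ × List ℕ+, 2 ^ (i.1 + csum i.2) * f i = n } =
    Fintype.card (Nat.Partition n) := by
  exact triangular_valued_count_eq_partitions_general _ TriangularPartitions.card_add_csum_eq n
end
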